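/- For every centrally symmetric convex body K in ℝ², the lattice packing density satisfies δ_L(K) ≥ |K|·|K°|/(2π√3), with equality if and only if K is an ellipse. -/

import Mathlib

open MeasureTheory Set Matrix Pointwise

noncomputable section

/-- The lattice `A · ℤⁿ` associated with an (invertible) matrix `A`. -/
def latticeOf {n : ℕ} (A : Matrix (Fin n) (Fin n) ℝ) : Set (Fin n → ℝ) :=
  Set.range fun m : Fin n → ℤ => A.mulVec fun i => (m i : ℝ)

/-- `Λ + K` is non-separable: every affine hyperplane `{y | ⟨u,y⟩ = c}` (with `u ≠ 0`)
meets `x + K` for some `x ∈ Λ`. -/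
def NonSeparable {n : ℕ} (Λ K : Set (Fin n → ℝ)) : Prop :=
  ∀ u : Fin n → ℝ, u ≠ 0 → ∀ c : ℝ, ∃ x ∈ Λ, ∃ y ∈ K, u ⬝ᵥ (x + y) = c

/-- `d_{n,n-1}(K)`: the smallest density `|K|/d(Λ)` of a non-separable
lattice of translates of `K`. -/
def dTrans {n : ℕ} (K : Set (Fin n → ℝ)) : ℝ :=
  sInf {d : ℝ | ∃ A : Matrix (Fin n) (Fin n) ℝ, A.det ≠ 0 ∧
    NonSeparable (latticeOf A) K ∧ d = (volume K).toReal / |A.det|}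

/-- The polar body `K° = {x | ∀ y ∈ K, ⟨y,x⟩ ≤ 1}`. -/
def polarBody {n : ℕ} (K : Set (Fin n → ℝ)) : Set (Fin n → ℝ) :=
  {x | ∀ y ∈ K, y ⬝ᵥ x ≤ 1}

/-- A set `Λ` is `K`-admissible if it meets the interior of `K` only in `0`. -/
def Admissible {n : ℕ} (Λ K : Set (Fin n → ℝ)) : Prop :=
  Λ ∩ interior K = {0}

/-- The critical determinant `Δ(K)`: the smallest determinant of a `K`-admissible lattice. -/
def critDet {n : ℕ} (K : Set (Fin n → ℝ)) : ℝ :=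
  sInf {d : ℝ | ∃ A : Matrix (Fin n) (Fin n) ℝ, A.det ≠ 0 ∧
    Admissible (latticeOf A) K ∧ d = |A.det|}

/-- The densest lattice packing density `δ_L(K) = |K| / (2ⁿ Δ(K))` of a
centrally symmetric convex body `K ⊆ ℝⁿ`. -/
def deltaL {n : ℕ} (K : Set (Fin n → ℝ)) : ℝ :=
  (volume K).toReal / (2 ^ n * critDet K)

/-- An ellipse: the image of the closed unit disc under an invertible affine map. -/
def IsEllipse (K : Set (Fin 2 → ℝ)) : Prop :=
  ∃ A : Matrix (Fin 2) (Fin 2) ℝ, A.det ≠ 0 ∧ ∃ v : Fin 2 → ℝ,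
    K = (fun x => A.mulVec x + v) '' {x : Fin 2 → ℝ | x ⬝ᵥ x ≤ 1}

/-!
Write `Δ = Δ(K)` and let `a, b, c` be points of `K°`. Suitable lattices in the coordinates
`v ↦ (⟨b, v⟩, ⟨c, v⟩)`, which avoid the three strips `|⟨a, v⟩| < 1`, `|⟨b, v⟩| < 1` and
`|⟨c, v⟩| < 1` simultaneously, are `K`-admissible; hence `Δ · |H| ≤ 9/4` for every symmetric hexagon
`H` inscribed in `K°`.

Following Sas, parametrise the upper boundary of `K°` by `x = m cos θ`. The area of `K°` is then
`2/√3` times the integral over `0 ≤ θ ≤ π/3` of the areas of the inscribed symmetric hexagons with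
vertices at the angles `θ`, `θ + π/3`, `θ + 2π/3`, so `Δ · |K°| ≤ π√3/2`.

If equality holds, each of these hexagons is maximal, and its three central parallelograms have
equal area. Maximality gives a support line at every boundary point; this is a differential
equation whose solutions `F (m cos θ) = M sin θ + L cos θ` are arcs of ellipses, so `K°`, and by
bipolarity `K`, is an ellipse. Conversely, reduction to the fundamental domain of `SL₂(ℤ)` shows
that a lattice avoiding the interior of the unit disc has determinant at least `√3/2`, and for an
ellipse this turns the bound into an equality.
-/

section Polar

variable {n : ℕ} {K : Set (Fin n → ℝ)} {a x : Fin n → ℝ}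

lemma neg_mem_polarBody (hsymm : K = -K) (ha : a ∈ polarBody K) : -a ∈ polarBody K := fun y hy => by
  rw [dotProduct_neg, ← neg_dotProduct]
  exact ha _ (by rwa [← Set.mem_neg, ← hsymm])

lemma polarBody_eq_neg (hsymm : K = -K) : polarBody K = -polarBody K :=
  Subset.antisymm (fun _ ha => neg_mem_polarBody hsymm ha)
    fun a ha => neg_neg a ▸ neg_mem_polarBody hsymm ha

lemma polarBody_eq_iInter (K : Set (Fin n → ℝ)) :
    polarBody K = ⋂ y ∈ K, {x | y ⬝ᵥ x ≤ 1} := by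
  ext x
  simp only [polarBody, mem_iInter, mem_ofPred_eq]

lemma isClosed_polarBody (K : Set (Fin n → ℝ)) : IsClosed (polarBody K) := by
  rw [polarBody_eq_iInter]
  exact isClosed_biInter fun y _ =>
    isClosed_le (continuous_const.dotProduct continuous_id) continuous_const

lemma convex_polarBody (K : Set (Fin n → ℝ)) : Convex ℝ (polarBody K) := by
  rw [polarBody_eq_iInter]
  exact convex_iInter₂ fun y _ => convex_halfSpace_le (dotProductBilin ℝ ℝ y).isLinear 1

lemma dotProduct_lt_one_of_mem_interior (ha : a ∈ polarBody K) (hx : x ∈ interior K) :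
    x ⬝ᵥ a < 1 := by
  have hcont : Filter.Tendsto (fun r : ℝ => r • x) (nhds 1) (nhds x) :=
    Continuous.tendsto' (by fun_prop) 1 x (one_smul ℝ x)
  have hnear : ∀ᶠ r : ℝ in nhds 1, r • x ∈ K := hcont (mem_interior_iff_mem_nhds.1 hx)
  obtain ⟨r, hr, hrK⟩ := (hnear.filter_mono nhdsWithin_le_nhds |>.and
    (self_mem_nhdsWithin (s := Ioi (1 : ℝ)))).exists.imp fun _ h => h.symm
  have hscaled : r * (x ⬝ᵥ a) ≤ 1 := by simpa only [smul_dotProduct, smul_eq_mul] using ha _ hrK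
  nlinarith [hr]

lemma abs_dotProduct_lt_one_of_mem_interior (hsymm : K = -K) (ha : a ∈ polarBody K)
    (hx : x ∈ interior K) : |a ⬝ᵥ x| < 1 := by
  rw [abs_lt, dotProduct_comm]
  have hneg := dotProduct_lt_one_of_mem_interior (neg_mem_polarBody hsymm ha) hx
  rw [dotProduct_neg] at hneg
  exact ⟨by linarith, dotProduct_lt_one_of_mem_interior ha hx⟩

lemma isCompact_polarBody (h0 : 0 ∈ interior K) : IsCompact (polarBody K) := by
  obtain ⟨r, hr, hball⟩ := Metric.mem_nhds_iff.1 (mem_interior_iff_mem_nhds.1 h0)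
  have hsingle : ∀ i (s : ℝ), |s| < r → Pi.single i s ∈ K := fun i s hs =>
    hball (by rwa [mem_ball_zero_iff, Pi.norm_single, Real.norm_eq_abs])
  refine (isCompact_Icc (a := fun _ => -(2 / r)) (b := fun _ => 2 / r)).of_isClosed_subset
    (isClosed_polarBody K) fun a ha => ?_
  have hhalf : |r / 2| < r := by rw [abs_of_pos (half_pos hr)]; linarith
  have hle : ∀ i, a i ≤ 2 / r ∧ -(2 / r) ≤ a i := fun i => by
    have hpos := ha _ (hsingle i (r / 2) hhalf)
    have hneg := ha _ (hsingle i (-(r / 2)) (by rwa [abs_neg]))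
    rw [single_dotProduct] at hpos hneg
    constructor
    · rw [le_div_iff₀ hr]; linarith
    · rw [← neg_div, div_le_iff₀ hr]; linarith
  exact ⟨fun i => (hle i).2, fun i => (hle i).1⟩

lemma exists_single_mem_polarBody (hK : Bornology.IsBounded K) :
    ∃ ε > 0, ∀ i, Pi.single i ε ∈ polarBody K := by
  obtain ⟨R, hR, hbound⟩ := hK.exists_pos_norm_le
  refine ⟨R⁻¹, inv_pos.2 hR, fun i y hy => ?_⟩
  rw [dotProduct_single, ← div_eq_mul_inv, div_le_one hR]
  exact (le_abs_self _).trans ((norm_le_pi_norm y i).trans (hbound y hy))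

lemma polarBody_polarBody (hclosed : IsClosed K) (hconv : Convex ℝ K) (h0 : 0 ∈ K) :
    polarBody (polarBody K) = K := by
  refine Subset.antisymm (fun x hx => ?_) fun x hx y hy => dotProduct_comm x y ▸ hy x hx
  by_contra hxK
  obtain ⟨f, u, hfK, hfx⟩ := geometric_hahn_banach_closed_point hconv hclosed hxK
  have hu : 0 < u := by simpa only [map_zero] using hfK 0 h0
  obtain ⟨w, hw⟩ := (dotProductEquiv ℝ (Fin n)).surjective f.toLinearMap
  have hfw : ∀ y, f y = w ⬝ᵥ y := fun y => (LinearMap.congr_fun hw y).symm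
  have hwK : u⁻¹ • w ∈ polarBody K := fun y hy => by
    rw [dotProduct_smul, dotProduct_comm, smul_eq_mul, ← hfw, inv_mul_le_one₀ hu]
    exact (hfK y hy).le
  have hwx : u⁻¹ * f x ≤ 1 := by
    simpa only [smul_dotProduct, smul_eq_mul, hfw] using hx _ hwK
  exact absurd ((inv_mul_le_one₀ hu).1 hwx) hfx.not_ge

lemma polarBody_mulVec_image (A : Matrix (Fin n) (Fin n) ℝ) :
    polarBody ((A *ᵥ ·) '' K) = (Aᵀ *ᵥ ·) ⁻¹' polarBody K := by
  ext x
  simp only [polarBody, forall_mem_image, mem_preimage, mem_ofPred_eq, mulVec_transpose,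
    dotProduct_comm _ x, dotProduct_comm _ (x ᵥ* A), dotProduct_mulVec]

lemma mulVec_image_eq_preimage {A : Matrix (Fin n) (Fin n) ℝ} (hA : A.det ≠ 0)
    (S : Set (Fin n → ℝ)) : (A *ᵥ ·) '' S = (A⁻¹ *ᵥ ·) ⁻¹' S := by
  have hunit : IsUnit A.det := isUnit_iff_ne_zero.2 hA
  refine congrFun (image_eq_preimage_of_inverse (fun x => ?_) fun x => ?_) S
  · rw [mulVec_mulVec, nonsing_inv_mul _ hunit, one_mulVec]
  · rw [mulVec_mulVec, mul_nonsing_inv _ hunit, one_mulVec]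

lemma polarBody_mulVec_image_of_det_ne_zero {A : Matrix (Fin n) (Fin n) ℝ} (hA : A.det ≠ 0) :
    polarBody ((A *ᵥ ·) '' K) = (Aᵀ⁻¹ *ᵥ ·) '' polarBody K := by
  have hunit : IsUnit Aᵀ.det := by rwa [det_transpose, isUnit_iff_ne_zero]
  rw [polarBody_mulVec_image, mulVec_image_eq_preimage (isUnit_nonsing_inv_det _ hunit).ne_zero,
    nonsing_inv_nonsing_inv _ hunit]

end Polar

lemma zero_mem_interior_of_convex_of_eq_neg {E : Type*} [AddCommGroup E] [Module ℝ E]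
    [TopologicalSpace E] [IsTopologicalAddGroup E] [ContinuousConstSMul ℝ E] {K : Set E}
    (hconv : Convex ℝ K) (hint : (interior K).Nonempty) (hsymm : K = -K) : 0 ∈ interior K := by
  obtain ⟨x, hx⟩ := hint
  have hneg : -x ∈ interior K := by
    have hpre : -x ∈ Neg.neg ⁻¹' interior K := by rwa [mem_preimage, neg_neg]
    rwa [← Homeomorph.coe_neg, Homeomorph.preimage_interior, Homeomorph.coe_neg, neg_preimage,
      ← hsymm] at hpre
  simpa using hconv.interior.midpoint_mem hx hneg

section CritDet

variable {n : ℕ} {K : Set (Fin n → ℝ)} {A P : Matrix (Fin n) (Fin n) ℝ}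

lemma critDet_nonneg (K : Set (Fin n → ℝ)) : 0 ≤ critDet K := by
  refine Real.sInf_nonneg ?_
  rintro _ ⟨A, -, -, rfl⟩
  exact abs_nonneg _

lemma critDet_le_abs_det (hA : A.det ≠ 0) (hadm : Admissible (latticeOf A) K) :
    critDet K ≤ |A.det| := by
  refine csInf_le ⟨0, ?_⟩ ⟨A, hA, hadm, rfl⟩
  rintro _ ⟨A, -, -, rfl⟩
  exact abs_nonneg _

lemma le_critDet {d : ℝ} (hA : A.det ≠ 0) (hadm : Admissible (latticeOf A) K)
    (hd : ∀ B : Matrix (Fin n) (Fin n) ℝ, B.det ≠ 0 → Admissible (latticeOf B) K → d ≤ |B.det|) :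
    d ≤ critDet K := by
  refine le_csInf ⟨_, A, hA, hadm, rfl⟩ ?_
  rintro _ ⟨B, hB, hBadm, rfl⟩
  exact hd B hB hBadm

lemma admissible_latticeOf (hsymm : K = -K) (h0 : 0 ∈ interior K)
    (h : ∀ m : Fin n → ℤ, m ≠ 0 →
      ∃ a ∈ polarBody K, 1 ≤ |a ⬝ᵥ A *ᵥ fun i => (m i : ℝ)|) :
    Admissible (latticeOf A) K := by
  refine Subset.antisymm ?_ (singleton_subset_iff.2 ⟨⟨0, ?_⟩, h0⟩)
  · rintro _ ⟨⟨m, rfl⟩, hmK⟩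
    by_contra hm
    obtain ⟨a, ha, hle⟩ := h m fun hm0 => hm <| by
      simp only [hm0, Pi.zero_apply, Int.cast_zero, mem_singleton_iff]
      exact mulVec_zero A
    exact hle.not_gt (abs_dotProduct_lt_one_of_mem_interior hsymm ha hmK)
  · simp only [Pi.zero_apply, Int.cast_zero]
    exact mulVec_zero A

lemma admissible_latticeOf_inv (hsymm : K = -K) (h0 : 0 ∈ interior K) (hP : P.det ≠ 0)
    (hrow : ∀ i, P.row i ∈ polarBody K) : Admissible (latticeOf P⁻¹) K := by
  refine admissible_latticeOf hsymm h0 fun m hm => ?_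
  obtain ⟨i, hi⟩ := Function.ne_iff.1 hm
  refine ⟨P.row i, hrow i, ?_⟩
  have hcoord : P.row i ⬝ᵥ P⁻¹ *ᵥ (fun j => (m j : ℝ)) = m i := by
    change (P *ᵥ P⁻¹ *ᵥ fun j => (m j : ℝ)) i = m i
    rw [mulVec_mulVec, mul_nonsing_inv _ (isUnit_iff_ne_zero.2 hP), one_mulVec]
  rw [hcoord]
  exact_mod_cast Int.one_le_abs hi

lemma critDet_mul_abs_det_le_one (hsymm : K = -K) (h0 : 0 ∈ interior K)
    (hrow : ∀ i, P.row i ∈ polarBody K) : critDet K * |P.det| ≤ 1 := by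
  rcases eq_or_ne P.det 0 with hP | hP
  · simp only [hP, abs_zero, mul_zero, zero_le_one]
  have hdet : P⁻¹.det = P.det⁻¹ := by rw [det_nonsing_inv, Ring.inverse_eq_inv']
  have hle := critDet_le_abs_det (hdet ▸ inv_ne_zero hP) (admissible_latticeOf_inv hsymm h0 hP hrow)
  rwa [hdet, abs_inv, ← one_div, le_div_iff₀ (abs_pos.2 hP)] at hle

lemma exists_admissible_latticeOf (hK : Bornology.IsBounded K) (hsymm : K = -K)
    (h0 : 0 ∈ interior K) :
    ∃ A : Matrix (Fin n) (Fin n) ℝ, A.det ≠ 0 ∧ Admissible (latticeOf A) K := by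
  obtain ⟨ε, hε, hmem⟩ := exists_single_mem_polarBody hK
  have hdet : (diagonal fun _ : Fin n => ε).det ≠ 0 := by
    rw [det_diagonal]
    exact Finset.prod_ne_zero_iff.2 fun _ _ => hε.ne'
  refine ⟨(diagonal fun _ => ε)⁻¹, ?_, admissible_latticeOf_inv hsymm h0 hdet fun i => ?_⟩
  · rw [det_nonsing_inv, Ring.inverse_eq_inv']
    exact inv_ne_zero hdet
  · rw [row_diagonal]
    exact hmem i

end CritDet

section Hexagon

/-- The planar cross product: the signed area of the parallelogram spanned by `a` and `b`. -/
def cross (a b : Fin 2 → ℝ) : ℝ := a 0 * b 1 - a 1 * b 0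

/-- The area of the centrally symmetric hexagon whose vertices are, in counterclockwise order,
`a, b, c, -a, -b, -c`. -/
def hexArea (a b c : Fin 2 → ℝ) : ℝ := cross a b + cross b c + cross a c

variable {K : Set (Fin 2 → ℝ)} {a b c : Fin 2 → ℝ}

lemma det_of_vecCons (a b : Fin 2 → ℝ) : (of ![a, b]).det = cross a b := by
  rw [det_fin_two, cross]
  simp only [of_apply, cons_val_zero, cons_val_one]

lemma cross_mul_dotProduct (a b c v : Fin 2 → ℝ) :
    cross b c * (a ⬝ᵥ v) = cross a c * (b ⬝ᵥ v) - cross a b * (c ⬝ᵥ v) := by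
  simp only [cross, dotProduct, Fin.sum_univ_two]
  ring

lemma critDet_mul_cross_le_one (hsymm : K = -K) (h0 : 0 ∈ interior K) (ha : a ∈ polarBody K)
    (hb : b ∈ polarBody K) : critDet K * cross a b ≤ 1 := by
  refine (mul_le_mul_of_nonneg_left (le_abs_self _) (critDet_nonneg K)).trans ?_
  rw [← det_of_vecCons]
  exact critDet_mul_abs_det_le_one hsymm h0 (Fin.forall_fin_two.2 ⟨ha, hb⟩)

lemma one_le_abs_hexagonal_form {x t s : ℝ} (hx0 : 0 ≤ x) (hx1 : x ≤ 1) (ht : 0 ≤ t) {m n : ℤ}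
    (hmn : m ≠ 0 ∨ n ≠ 0) :
    1 ≤ |x * m + (x - 1) * n| ∨ 1 ≤ |m + t * n| ∨ 1 ≤ |s * m + n| := by
  rcases eq_or_ne m 0 with rfl | hm
  · have hn : (1 : ℝ) ≤ |(n : ℝ)| := by exact_mod_cast Int.one_le_abs (hmn.resolve_left (· rfl))
    exact .inr (.inr (by simpa using hn))
  rcases lt_or_gt_of_ne hm with hm | hm <;> rcases lt_trichotomy n 0 with hn | rfl | hn
  · have hm : (m : ℝ) ≤ -1 := by exact_mod_cast Int.le_sub_one_of_lt hm
    have hn : (n : ℝ) ≤ 0 := by exact_mod_cast hn.le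
    exact .inr (.inl (le_abs.2 (.inr (by nlinarith))))
  · exact .inr (.inl (by simpa using mod_cast Int.one_le_abs hm.ne))
  · have hm : (m : ℝ) ≤ -1 := by exact_mod_cast Int.le_sub_one_of_lt hm
    have hn : (1 : ℝ) ≤ n := by exact_mod_cast hn
    exact .inl (le_abs.2 (.inr (by nlinarith)))
  · have hm : (1 : ℝ) ≤ m := by exact_mod_cast hm
    have hn : (n : ℝ) ≤ -1 := by exact_mod_cast Int.le_sub_one_of_lt hn
    exact .inl (le_abs.2 (.inl (by nlinarith)))
  · exact .inr (.inl (by simpa using mod_cast Int.one_le_abs hm.ne'))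
  · have hm : (1 : ℝ) ≤ m := by exact_mod_cast hm
    have hn : (0 : ℝ) ≤ n := by exact_mod_cast hn.le
    exact .inr (.inl (le_abs.2 (.inl (by nlinarith))))

lemma admissible_hexagonal (hsymm : K = -K) (h0 : 0 ∈ interior K) (ha : a ∈ polarBody K)
    (hb : b ∈ polarBody K) (hc : c ∈ polarBody K) (hbc : cross b c ≠ 0) {x t s : ℝ} (hx0 : 0 ≤ x)
    (hx1 : x ≤ 1) (ht : 0 ≤ t) (hxs : cross b c * x = cross a c - cross a b * s)
    (hxt : cross b c * (x - 1) = cross a c * t - cross a b) :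
    Admissible (latticeOf ((of ![b, c])⁻¹ * !![1, t; s, 1])) K := by
  refine admissible_latticeOf hsymm h0 fun m hm => ?_
  set v := ((of ![b, c])⁻¹ * !![1, t; s, 1]) *ᵥ fun i => (m i : ℝ)
  have hv : of ![b, c] *ᵥ v = !![1, t; s, 1] *ᵥ fun i => (m i : ℝ) := by
    rw [mulVec_mulVec, mul_nonsing_inv_cancel_left]
    rwa [det_of_vecCons, isUnit_iff_ne_zero]
  have hbv : b ⬝ᵥ v = m 0 + t * m 1 := by
    simpa [mulVec, dotProduct, Fin.sum_univ_two] using congrFun hv 0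
  have hcv : c ⬝ᵥ v = s * m 0 + m 1 := by
    simpa [mulVec, dotProduct, Fin.sum_univ_two] using congrFun hv 1
  have hav : a ⬝ᵥ v = x * m 0 + (x - 1) * m 1 := by
    refine mul_left_cancel₀ hbc ?_
    rw [cross_mul_dotProduct, hbv, hcv]
    linear_combination (-(m 0 : ℝ)) * hxs - (m 1 : ℝ) * hxt
  have hmn : m 0 ≠ 0 ∨ m 1 ≠ 0 := by
    by_contra! h
    exact hm (funext (Fin.forall_fin_two.2 h))
  rcases one_le_abs_hexagonal_form (s := s) hx0 hx1 ht hmn with h | h | h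
  · exact ⟨a, ha, hav ▸ h⟩
  · exact ⟨b, hb, hbv ▸ h⟩
  · exact ⟨c, hc, hcv ▸ h⟩

lemma critDet_mul_le_of_triangle (hsymm : K = -K) (h0 : 0 ∈ interior K) (ha : a ∈ polarBody K)
    (hb : b ∈ polarBody K) (hc : c ∈ polarBody K) {α β γ : ℝ} (hab : cross a b = α)
    (hbc : cross b c = β) (hac : cross a c = γ) (hα : 0 < β + γ - α) (hβ : 0 < γ + α - β)
    (hγ : 0 < α + β - γ) :
    critDet K * (4 * (α * β * γ)) ≤ α * (β + γ - α) + β * (γ + α - β) + γ * (α + β - γ) := by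
  have hα0 : 0 < α := by linarith
  have hβ0 : 0 < β := by linarith
  have hγ0 : 0 < γ := by linarith
  -- The critical lattice of the hexagon polar to `a, b, c, -a, -b, -c`: it is generated by the
  -- midpoints of two adjacent edges.
  let A := (of ![b, c])⁻¹ * !![1, (γ + α - β) / (2 * γ); (γ + α - β) / (2 * α), 1]
  have hadm : Admissible (latticeOf A) K := by
    refine admissible_hexagonal (x := (β + γ - α) / (2 * β)) hsymm h0 ha hb hc (hbc ▸ hβ0.ne')
      (by positivity) ((div_le_one (by positivity)).2 (by linarith)) (by positivity) ?_ ?_ <;>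
    · rw [hab, hbc, hac]
      field_simp
      ring
  have hdet : A.det =
      (α * (β + γ - α) + β * (γ + α - β) + γ * (α + β - γ)) / (4 * (α * β * γ)) := by
    rw [det_mul, det_nonsing_inv, Ring.inverse_eq_inv', det_of_vecCons, hbc, det_fin_two_of]
    field_simp
    ring
  have hpos : 0 < A.det := by rw [hdet]; positivity
  have hle := critDet_le_abs_det hpos.ne' hadm
  rwa [abs_of_pos hpos, hdet, le_div_iff₀ (by positivity)] at hle

lemma critDet_mul_hexArea_le_two_or_triangle (hsymm : K = -K) (h0 : 0 ∈ interior K)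
    (ha : a ∈ polarBody K) (hb : b ∈ polarBody K) (hc : c ∈ polarBody K) :
    critDet K * hexArea a b c ≤ 2 ∨
      (0 < cross b c + cross a c - cross a b ∧ 0 < cross a c + cross a b - cross b c ∧
        0 < cross a b + cross b c - cross a c) := by
  have hΔ := critDet_nonneg K
  have hle : ∀ {r : ℝ}, critDet K * r ≤ 1 → hexArea a b c ≤ 2 * r →
      critDet K * hexArea a b c ≤ 2 := fun hr hr' => by
    linarith [mul_le_mul_of_nonneg_left hr' hΔ]
  have hab := hle (critDet_mul_cross_le_one hsymm h0 ha hb)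
  have hbc := hle (critDet_mul_cross_le_one hsymm h0 hb hc)
  have hac := hle (critDet_mul_cross_le_one hsymm h0 ha hc)
  simp only [hexArea] at hab hbc hac ⊢
  by_contra! h
  grind

lemma sum_mul_sq_sub_le_of_triangle (hsymm : K = -K) (h0 : 0 ∈ interior K)
    (ha : a ∈ polarBody K) (hb : b ∈ polarBody K) (hc : c ∈ polarBody K) {α β γ : ℝ}
    (hab : cross a b = α) (hbc : cross b c = β) (hac : cross a c = γ)
    (hα : 0 < β + γ - α) (hβ : 0 < γ + α - β) (hγ : 0 < α + β - γ) :
    (α + β - γ) * (α - β) ^ 2 + (β + γ - α) * (β - γ) ^ 2 + (γ + α - β) * (γ - α) ^ 2 ≤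
      8 * (α * β * γ) * (9 / 4 - critDet K * hexArea a b c) := by
  have hle := critDet_mul_le_of_triangle hsymm h0 ha hb hc hab hbc hac hα hβ hγ
  have hsum : 0 ≤ 2 * (α + β + γ) := by linarith
  rw [hexArea, hab, hbc, hac]
  linarith [mul_le_mul_of_nonneg_right hle hsum]

lemma critDet_mul_hexArea_le (hsymm : K = -K) (h0 : 0 ∈ interior K) (ha : a ∈ polarBody K)
    (hb : b ∈ polarBody K) (hc : c ∈ polarBody K) : critDet K * hexArea a b c ≤ 9 / 4 := by
  rcases critDet_mul_hexArea_le_two_or_triangle hsymm h0 ha hb hc with hle | ⟨hα, hβ, hγ⟩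
  · linarith
  have hdefect : 0 ≤ 8 * (cross a b * cross b c * cross a c) *
      (9 / 4 - critDet K * hexArea a b c) :=
    (by positivity : (0 : ℝ) ≤ _).trans
      (sum_mul_sq_sub_le_of_triangle hsymm h0 ha hb hc rfl rfl rfl hα hβ hγ)
  have hprod : 0 < cross a b * cross b c * cross a c :=
    mul_pos (mul_pos (by linarith) (by linarith)) (by linarith)
  exact sub_nonneg.1 (nonneg_of_mul_nonneg_right hdefect (by linarith))

lemma cross_eq_of_critDet_mul_hexArea_eq (hsymm : K = -K) (h0 : 0 ∈ interior K)
    (ha : a ∈ polarBody K) (hb : b ∈ polarBody K) (hc : c ∈ polarBody K)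
    (heq : critDet K * hexArea a b c = 9 / 4) :
    cross a b = cross b c ∧ cross b c = cross a c := by
  rcases critDet_mul_hexArea_le_two_or_triangle hsymm h0 ha hb hc with hle | ⟨hα, hβ, hγ⟩
  · linarith
  have hdefect := sum_mul_sq_sub_le_of_triangle hsymm h0 ha hb hc rfl rfl rfl hα hβ hγ
  rw [heq, sub_self, mul_zero] at hdefect
  have h₁ := mul_nonneg hγ.le (sq_nonneg (cross a b - cross b c))
  have h₂ := mul_nonneg hα.le (sq_nonneg (cross b c - cross a c))
  have h₃ := mul_nonneg hβ.le (sq_nonneg (cross a c - cross a b))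
  have eq_of_mul_sq_eq_zero {r p q : ℝ} (hr : 0 < r) (h : r * (p - q) ^ 2 = 0) : p = q :=
    sub_eq_zero.1 (pow_eq_zero_iff two_ne_zero |>.1 ((mul_eq_zero.1 h).resolve_left hr.ne'))
  exact ⟨eq_of_mul_sq_eq_zero hγ (by linarith), eq_of_mul_sq_eq_zero hα (by linarith)⟩

end Hexagon

section UnitBall

variable {n : ℕ} {K : Set (Fin n → ℝ)} {A : Matrix (Fin n) (Fin n) ℝ}

/-- The Euclidean unit ball of `ℝⁿ`, as a subset of `Fin n → ℝ` (whose norm is the sup norm). -/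
def euclideanUnitBall (n : ℕ) : Set (Fin n → ℝ) := {x | x ⬝ᵥ x ≤ 1}

lemma isClosed_euclideanUnitBall (n : ℕ) : IsClosed (euclideanUnitBall n) :=
  isClosed_le (continuous_id.dotProduct continuous_id) continuous_const

lemma norm_le_one_of_mem_euclideanUnitBall {x : Fin n → ℝ} (hx : x ∈ euclideanUnitBall n) :
    ‖x‖ ≤ 1 := by
  refine (pi_norm_le_iff_of_nonneg zero_le_one).2 fun i => abs_le_one_iff_mul_self_le_one.2 ?_
  exact (Finset.single_le_sum (fun j _ => mul_self_nonneg (x j)) (Finset.mem_univ i)).trans hx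

lemma isCompact_euclideanUnitBall (n : ℕ) : IsCompact (euclideanUnitBall n) :=
  Metric.isCompact_of_isClosed_isBounded (isClosed_euclideanUnitBall n)
    (isBounded_iff_forall_norm_le.2 ⟨1, fun _ => norm_le_one_of_mem_euclideanUnitBall⟩)

lemma dotProduct_self_nonneg (x : Fin n → ℝ) : 0 ≤ x ⬝ᵥ x :=
  Finset.sum_nonneg fun i _ => mul_self_nonneg (x i)

lemma dotProduct_le_one_of_mem_euclideanUnitBall {x y : Fin n → ℝ}
    (hx : x ∈ euclideanUnitBall n) (hy : y ∈ euclideanUnitBall n) : x ⬝ᵥ y ≤ 1 := by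
  have hsq : 0 ≤ (x - y) ⬝ᵥ (x - y) := dotProduct_self_nonneg _
  simp only [sub_dotProduct, dotProduct_sub, dotProduct_comm y x] at hsq
  simp only [euclideanUnitBall, mem_ofPred_eq] at hx hy
  linarith

lemma polarBody_euclideanUnitBall (n : ℕ) :
    polarBody (euclideanUnitBall n) = euclideanUnitBall n := by
  refine Subset.antisymm (fun x hx => ?_)
    fun x hx y hy => dotProduct_le_one_of_mem_euclideanUnitBall hy hx
  by_contra! hlt
  simp only [euclideanUnitBall, mem_ofPred_eq, not_le] at hlt
  have hsqrt : 1 < √(x ⬝ᵥ x) := by rwa [Real.lt_sqrt zero_le_one, one_pow]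
  have hsq : √(x ⬝ᵥ x) * √(x ⬝ᵥ x) = x ⬝ᵥ x := Real.mul_self_sqrt (by linarith)
  have hunit : (√(x ⬝ᵥ x))⁻¹ • x ∈ euclideanUnitBall n := by
    simp only [euclideanUnitBall, mem_ofPred_eq, smul_dotProduct, dotProduct_smul, smul_eq_mul]
    rw [← mul_assoc, ← mul_inv, hsq, inv_mul_cancel₀ (by linarith)]
  have hle := hx _ hunit
  rw [smul_dotProduct, smul_eq_mul, inv_mul_le_one₀ (by linarith)] at hle
  nlinarith

lemma mulVec_mem_interior (hA : A.det ≠ 0) (hK : (A *ᵥ ·) '' euclideanUnitBall n ⊆ K)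
    {y : Fin n → ℝ} (hy : y ⬝ᵥ y < 1) : A *ᵥ y ∈ interior K := by
  have hopen : IsOpen ((A *ᵥ ·) '' {x : Fin n → ℝ | x ⬝ᵥ x < 1}) := by
    rw [mulVec_image_eq_preimage hA]
    exact (isOpen_lt (continuous_id.dotProduct continuous_id) continuous_const).preimage
      (continuous_const.matrix_mulVec continuous_id)
  have hsub : {x : Fin n → ℝ | x ⬝ᵥ x < 1} ⊆ euclideanUnitBall n :=
    ofPred_subset_ofPred.2 fun _ => le_of_lt
  exact interior_maximal ((image_mono hsub).trans hK) hopen ⟨y, hy, rfl⟩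

lemma eq_zero_of_forall_add_mem {S : Set (Fin n → ℝ)} (hS : IsCompact S) (hne : S.Nonempty)
    {w : Fin n → ℝ} (h : ∀ x ∈ S, x + w ∈ S) : w = 0 := by
  obtain ⟨x, hx, hmax⟩ := hS.exists_isMaxOn hne
    (continuous_const (y := w) |>.dotProduct continuous_id).continuousOn
  have hle : w ⬝ᵥ (x + w) ≤ w ⬝ᵥ x := hmax (h x hx)
  rw [dotProduct_add] at hle
  exact dotProduct_self_eq_zero.1 (le_antisymm (by linarith) (dotProduct_self_nonneg w))

lemma IsEllipse.exists_eq_mulVec_image {K : Set (Fin 2 → ℝ)} (hE : IsEllipse K)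
    (hsymm : K = -K) : ∃ A : Matrix (Fin 2) (Fin 2) ℝ, A.det ≠ 0 ∧
      K = (A *ᵥ ·) '' euclideanUnitBall 2 := by
  obtain ⟨A, hA, v, hK⟩ := hE
  have hcompact : IsCompact K := hK ▸ (isCompact_euclideanUnitBall 2).image
    ((continuous_const.matrix_mulVec continuous_id).add continuous_const)
  have hne : K.Nonempty := hK ▸ Set.Nonempty.image _ ⟨0, by simp⟩
  have hshift : ∀ x ∈ K, x + -(v + v) ∈ K := by
    intro x hx
    rw [hK] at hx
    obtain ⟨y, hy, rfl⟩ := hx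
    rw [hsymm, Set.mem_neg, hK]
    refine ⟨-y, by simpa only [mem_ofPred_eq, neg_dotProduct_neg] using hy, ?_⟩
    simp only [mulVec_neg]
    abel
  have hv : v = 0 := by
    simpa [← two_smul ℝ v] using eq_zero_of_forall_add_mem hcompact hne hshift
  refine ⟨A, hA, hK.trans ?_⟩
  simp only [hv, add_zero, euclideanUnitBall]

lemma ofLp_preimage_euclideanUnitBall (n : ℕ) :
    (WithLp.ofLp ⁻¹' euclideanUnitBall n : Set (EuclideanSpace ℝ (Fin n))) =
      Metric.closedBall 0 1 := by
  ext x
  rw [mem_closedBall_zero_iff, EuclideanSpace.norm_eq, Real.sqrt_le_one]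
  simp only [euclideanUnitBall, mem_preimage, mem_ofPred_eq, dotProduct, Real.norm_eq_abs, sq_abs,
    ← sq]

lemma volume_euclideanUnitBall_two : (volume (euclideanUnitBall 2)).toReal = Real.pi := by
  rw [← (PiLp.volume_preserving_ofLp (Fin 2)).measure_preimage
    (isClosed_euclideanUnitBall 2).nullMeasurableSet, ofLp_preimage_euclideanUnitBall,
    EuclideanSpace.volume_closedBall_fin_two]
  simp [Real.pi_pos.le]

lemma volume_mulVec_image (A : Matrix (Fin n) (Fin n) ℝ) (S : Set (Fin n → ℝ)) :
    (volume ((A *ᵥ ·) '' S)).toReal = |A.det| * (volume S).toReal := by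
  change (volume (toLin' A '' S)).toReal = _
  rw [Measure.addHaar_image_linearMap, LinearMap.det_toLin', ENNReal.toReal_mul,
    ENNReal.toReal_ofReal (abs_nonneg _)]

end UnitBall

section Hermite

lemma exists_normSq_mul_add_le_of_im_pos {z : ℂ} (hz : 0 < z.im) :
    ∃ m : Fin 2 → ℤ, m ≠ 0 ∧ √3 / 2 * Complex.normSq (m 0 + m 1 * z) ≤ z.im := by
  obtain ⟨g, hg⟩ := ModularGroup.exists_smul_mem_fd ⟨z, hz⟩
  have him := ModularGroup.im_smul_eq_div_normSq g ⟨z, hz⟩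
  refine ⟨![g 1 1, g 1 0], fun h => ?_, ?_⟩
  · have hdet := g.det_coe
    have h0 : g 1 1 = 0 := congrFun h 0
    have h1 : g 1 0 = 0 := congrFun h 1
    rw [det_fin_two, h0, h1] at hdet
    simp at hdet
  have hsqrt : √3 / 2 ≤ (g • (⟨z, hz⟩ : UpperHalfPlane)).im := by
    refine le_of_sq_le_sq ?_ (UpperHalfPlane.im_pos _).le
    rw [div_pow, Real.sq_sqrt zero_le_three]
    linarith [ModularGroup.three_le_four_mul_im_sq_of_mem_fd hg]
  rw [him, le_div_iff₀ (UpperHalfPlane.normSq_denom_pos _ (UpperHalfPlane.im_ne_zero _)),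
    ModularGroup.denom_apply] at hsqrt
  simpa [add_comm] using hsqrt

lemma exists_normSq_mul_add_le {z : ℂ} (hz : z.im ≠ 0) :
    ∃ m : Fin 2 → ℤ, m ≠ 0 ∧ √3 / 2 * Complex.normSq (m 0 + m 1 * z) ≤ |z.im| := by
  rcases lt_or_gt_of_ne hz with hneg | hpos
  · obtain ⟨m, hm, hle⟩ := exists_normSq_mul_add_le_of_im_pos (z := starRingEnd ℂ z)
      (by simpa using hneg)
    refine ⟨m, hm, ?_⟩
    rw [← Complex.normSq_conj, abs_of_neg hneg]
    simpa using hle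
  · rw [abs_of_pos hpos]
    exact exists_normSq_mul_add_le_of_im_pos hpos

lemma exists_dotProduct_mulVec_self_le {A : Matrix (Fin 2) (Fin 2) ℝ} (hA : A.det ≠ 0) :
    ∃ m : Fin 2 → ℤ, m ≠ 0 ∧
      √3 / 2 * ((A *ᵥ fun i => (m i : ℝ)) ⬝ᵥ A *ᵥ fun i => (m i : ℝ)) ≤ |A.det| := by
  set z : Fin 2 → ℂ := fun j => ⟨A 0 j, A 1 j⟩ with hz
  have hdet : A.det = (z 1 * starRingEnd ℂ (z 0)).im := by
    rw [det_fin_two]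
    simp only [hz, Complex.mul_im, Complex.conj_im, mul_neg, Complex.conj_re]
    ring
  have hz0 : z 0 ≠ 0 := fun h => hA (by rw [hdet, h]; simp)
  have hdet' : A.det = Complex.normSq (z 0) * (z 1 / z 0).im := by
    rw [hdet, Complex.div_im]
    have := Complex.normSq_pos.2 hz0
    field_simp
    simp only [Complex.mul_im, Complex.conj_im, mul_neg, Complex.conj_re]
    ring
  obtain ⟨m, hm, hle⟩ := exists_normSq_mul_add_le (z := z 1 / z 0)
    fun h => hA (by rw [hdet', h, mul_zero])
  refine ⟨m, hm, ?_⟩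
  have hnorm : (A *ᵥ fun i => (m i : ℝ)) ⬝ᵥ (A *ᵥ fun i => (m i : ℝ)) =
      Complex.normSq (z 0) * Complex.normSq (m 0 + m 1 * (z 1 / z 0)) := by
    rw [← map_mul, mul_add, mul_left_comm, mul_div_cancel₀ _ hz0, Complex.normSq_apply]
    simp only [hz, mulVec, dotProduct, Fin.sum_univ_two, Complex.add_re, Complex.add_im,
      Complex.mul_re, Complex.mul_im, Complex.intCast_re, Complex.intCast_im, mul_zero, zero_mul,
      sub_zero, add_zero]
    ring
  rw [hnorm, hdet', abs_mul, abs_of_nonneg (Complex.normSq_nonneg _), mul_left_comm]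
  exact mul_le_mul_of_nonneg_left hle (Complex.normSq_nonneg _)

lemma sqrt_three_div_two_mul_abs_det_le_critDet {K : Set (Fin 2 → ℝ)}
    (hbdd : Bornology.IsBounded K) (hsymm : K = -K)
    {A : Matrix (Fin 2) (Fin 2) ℝ} (hA : A.det ≠ 0) (hK : (A *ᵥ ·) '' euclideanUnitBall 2 ⊆ K) :
    √3 / 2 * |A.det| ≤ critDet K := by
  have h0 : 0 ∈ interior K := by simpa using mulVec_mem_interior hA hK (y := 0) (by simp)
  obtain ⟨B₀, hB₀, hadm₀⟩ := exists_admissible_latticeOf hbdd hsymm h0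
  refine le_critDet hB₀ hadm₀ fun B hB hadm => ?_
  have hunit : IsUnit A.det := isUnit_iff_ne_zero.2 hA
  have hdet : (A⁻¹ * B).det = A.det⁻¹ * B.det := by
    rw [det_mul, det_nonsing_inv, Ring.inverse_eq_inv']
  obtain ⟨m, hm, hle⟩ := exists_dotProduct_mulVec_self_le
    (hdet ▸ mul_ne_zero (inv_ne_zero hA) hB : (A⁻¹ * B).det ≠ 0)
  rw [hdet, abs_mul, abs_inv, inv_mul_eq_div, le_div_iff₀ (abs_pos.2 hA)] at hle
  by_contra! hlt
  have hshort : ((A⁻¹ * B) *ᵥ fun i => (m i : ℝ)) ⬝ᵥ ((A⁻¹ * B) *ᵥ fun i => (m i : ℝ)) < 1 := by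
    by_contra! hge
    refine hlt.not_ge (le_trans ?_ hle)
    gcongr
    exact le_mul_of_one_le_right (by positivity) hge
  have hmem := mulVec_mem_interior hA hK hshort
  rw [mulVec_mulVec, mul_nonsing_inv_cancel_left _ _ hunit] at hmem
  have hzero : B *ᵥ (fun i => (m i : ℝ)) = 0 := by
    rw [← mem_singleton_iff, ← hadm]
    exact ⟨⟨m, rfl⟩, hmem⟩
  refine hm (funext fun i => ?_)
  exact Int.cast_eq_zero.1 (congrFun (eq_zero_of_mulVec_eq_zero hB hzero) i)

lemma critDet_pos {K : Set (Fin 2 → ℝ)} (hbdd : Bornology.IsBounded K) (hsymm : K = -K)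
    (h0 : 0 ∈ interior K) : 0 < critDet K := by
  obtain ⟨r, hr, hball⟩ := Metric.mem_nhds_iff.1 (mem_interior_iff_mem_nhds.1 h0)
  have hdet : ((r / 2) • (1 : Matrix (Fin 2) (Fin 2) ℝ)).det = (r / 2) ^ 2 := by
    rw [det_smul, det_one, mul_one, Fintype.card_fin]
  have hdet_ne : ((r / 2) • (1 : Matrix (Fin 2) (Fin 2) ℝ)).det ≠ 0 := by rw [hdet]; positivity
  refine lt_of_lt_of_le (by positivity)
    (sqrt_three_div_two_mul_abs_det_le_critDet hbdd hsymm hdet_ne ?_)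
  rintro _ ⟨x, hx, rfl⟩
  refine hball (mem_ball_zero_iff.2 ?_)
  have hx1 : ‖x‖ ≤ 1 := norm_le_one_of_mem_euclideanUnitBall hx
  simp only [smul_mulVec, one_mulVec, norm_smul, Real.norm_eq_abs, abs_of_pos (half_pos hr)]
  nlinarith

end Hermite

section Integral

lemma integrableOn_Icc_of_continuousOn_Ioo {f : ℝ → ℝ} {a b R : ℝ} (hf : ContinuousOn f (Ioo a b))
    (hR : ∀ x ∈ Ioo a b, |f x| ≤ R) : IntegrableOn f (Icc a b) := by
  rw [integrableOn_Icc_iff_integrableOn_Ioo]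
  refine .of_bound measure_Ioo_lt_top (hf.aestronglyMeasurable measurableSet_Ioo) R ?_
  exact (ae_restrict_iff' measurableSet_Ioo).2 (.of_forall hR)

lemma integral_add_shifts {g : ℝ → ℝ} {c : ℝ} (hc : 0 ≤ c)
    (hg : IntervalIntegrable g volume 0 (3 * c)) :
    IntervalIntegrable (fun θ => g θ + g (θ + c) + g (θ + 2 * c)) volume 0 c ∧
      ∫ θ in 0..c, (g θ + g (θ + c) + g (θ + 2 * c)) = ∫ θ in 0..3 * c, g θ := by
  have hsub {a b : ℝ} (ha : 0 ≤ a) (hab : a ≤ b) (hb : b ≤ 3 * c) :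
      IntervalIntegrable g volume a b := by
    refine hg.mono_set ?_
    rw [uIcc_of_le hab, uIcc_of_le (by linarith)]
    exact Icc_subset_Icc ha hb
  have hg₀ : IntervalIntegrable g volume 0 c := hsub le_rfl hc (by linarith)
  have hg₁ : IntervalIntegrable g volume c (2 * c) := hsub hc (by linarith) (by linarith)
  have hg₂ : IntervalIntegrable g volume (2 * c) (3 * c) :=
    hsub (by linarith) (by linarith) le_rfl
  have hs₁ : IntervalIntegrable (fun θ => g (θ + c)) volume 0 c := by
    convert hg₁.comp_add_right c using 1 <;> ring
  have hs₂ : IntervalIntegrable (fun θ => g (θ + 2 * c)) volume 0 c := by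
    convert hg₂.comp_add_right (2 * c) using 1 <;> ring
  refine ⟨(hg₀.add hs₁).add hs₂, ?_⟩
  rw [intervalIntegral.integral_add (hg₀.add hs₁) hs₂, intervalIntegral.integral_add hg₀ hs₁,
    intervalIntegral.integral_comp_add_right g, intervalIntegral.integral_comp_add_right g,
    ← intervalIntegral.integral_add_adjacent_intervals (hg₀.trans hg₁) hg₂,
    ← intervalIntegral.integral_add_adjacent_intervals hg₀ hg₁, zero_add, zero_add, ← two_mul,
    show c + 2 * c = 3 * c by ring]

lemma eqOn_Ioo_of_le_integral {f : ℝ → ℝ} {a b B : ℝ} (hab : a ≤ b) (hf : ContinuousOn f (Ioo a b))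
    (hint : IntervalIntegrable f volume a b) (hle : ∀ x, f x ≤ B)
    (hB : (b - a) * B ≤ ∫ x in a..b, f x) : EqOn f (fun _ => B) (Ioo a b) := by
  have hsub : IntervalIntegrable (fun x => B - f x) volume a b := intervalIntegrable_const.sub hint
  have hzero : ∫ x in a..b, (B - f x) = 0 := by
    refine le_antisymm ?_ (intervalIntegral.integral_nonneg hab fun x _ => sub_nonneg.2 (hle x))
    rw [intervalIntegral.integral_sub intervalIntegrable_const hint,
      intervalIntegral.integral_const, smul_eq_mul]
    exact sub_nonpos.2 hB
  have hae : (fun x => B - f x) =ᵐ[volume.restrict (Ioc a b)] fun _ => 0 :=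
    (intervalIntegral.integral_eq_zero_iff_of_le_of_nonneg_ae hab
      (.of_forall fun x => sub_nonneg.2 (hle x)) hsub).1 hzero
  intro x hx
  exact (sub_eq_zero.1 (Measure.eqOn_open_of_ae_eq
    (ae_restrict_of_ae_restrict_of_subset Ioo_subset_Ioc_self hae) isOpen_Ioo
    (continuousOn_const.sub hf) continuousOn_const hx)).symm

lemma mul_cos_mem_Icc {m : ℝ} (hm : 0 ≤ m) (θ : ℝ) : m * Real.cos θ ∈ Icc (-m) m := by
  rw [mem_Icc, ← abs_le, abs_mul, abs_of_nonneg hm]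
  exact mul_le_of_le_one_right hm (Real.abs_cos_le_one θ)

lemma mul_cos_mem_Ioo {m θ : ℝ} (hm : 0 < m) (hθ : θ ∈ Ioo 0 Real.pi) :
    m * Real.cos θ ∈ Ioo (-m) m := by
  have hcos : |Real.cos θ| < 1 := by
    rw [← sq_lt_one_iff_abs_lt_one, Real.cos_sq']
    linarith [pow_pos (Real.sin_pos_of_mem_Ioo hθ) 2]
  rw [mem_Ioo, ← abs_lt, abs_mul, abs_of_pos hm]
  exact mul_lt_of_lt_one_right hm hcos

lemma continuousOn_comp_mul_cos {F : ℝ → ℝ} {m : ℝ} (hm : 0 < m)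
    (hF : ContinuousOn F (Ioo (-m) m)) :
    ContinuousOn (fun θ => F (m * Real.cos θ)) (Ioo 0 Real.pi) :=
  hF.comp (by fun_prop) fun _ hθ => mul_cos_mem_Ioo hm hθ

lemma integral_comp_mul_cos {F : ℝ → ℝ} {m R : ℝ} (hm : 0 < m) (hF : ContinuousOn F (Ioo (-m) m))
    (hR : ∀ x ∈ Icc (-m) m, |F x| ≤ R) :
    IntervalIntegrable (fun θ => F (m * Real.cos θ) * (m * Real.sin θ)) volume 0 Real.pi ∧
      ∫ θ in 0..Real.pi, F (m * Real.cos θ) * (m * Real.sin θ) = ∫ x in -m..m, F x := by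
  have hint : IntegrableOn (fun θ => F (m * Real.cos θ) * (m * Real.sin θ)) (Icc 0 Real.pi) := by
    refine integrableOn_Icc_of_continuousOn_Ioo (R := R * m)
      ((continuousOn_comp_mul_cos hm hF).mul (by fun_prop)) fun θ _ => ?_
    rw [abs_mul]
    refine mul_le_mul (hR _ (mul_cos_mem_Icc hm.le θ)) ?_ (abs_nonneg _)
      ((abs_nonneg _).trans (hR _ (mul_cos_mem_Icc hm.le θ)))
    rw [abs_mul, abs_of_pos hm]
    exact mul_le_of_le_one_right hm.le (Real.abs_sin_le_one θ)
  refine ⟨(intervalIntegrable_iff_integrableOn_Icc_of_le Real.pi_pos.le).2 hint, ?_⟩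
  have hsubst := intervalIntegral.integral_comp_mul_deriv''' (a := 0) (b := Real.pi)
    (f := fun θ => m * Real.cos θ) (f' := fun θ => -(m * Real.sin θ)) (g := F) (by fun_prop)
    (fun θ _ => by simpa using ((Real.hasDerivAt_cos θ).const_mul m).hasDerivWithinAt)
    (hF.mono ?_)
    ((integrableOn_Icc_of_continuousOn_Ioo hF fun x hx => hR x (Ioo_subset_Icc_self hx)).mono_set
      (image_subset_iff.2 fun θ _ => mul_cos_mem_Icc hm.le θ))
    ?_
  · simp only [Function.comp_apply, mul_neg, Real.cos_zero, Real.cos_pi, mul_one,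
      intervalIntegral.integral_neg] at hsubst
    rw [intervalIntegral.integral_symm m (-m), ← hsubst, neg_neg]
  · rw [min_eq_left Real.pi_pos.le, max_eq_right Real.pi_pos.le]
    exact image_subset_iff.2 fun θ hθ => mul_cos_mem_Ioo hm hθ
  · simpa only [Function.comp_apply, mul_neg, uIcc_of_le Real.pi_pos.le] using hint.fun_neg

lemma volume_eq_lintegral_slice {C : Set (Fin 2 → ℝ)} (hC : MeasurableSet C) :
    volume C = ∫⁻ x, volume {y | ![x, y] ∈ C} := by
  let e := (MeasurableEquiv.finTwoArrow (α := ℝ)).symm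
  rw [← (volume_preserving_finTwoArrow ℝ).symm.measure_preimage hC.nullMeasurableSet,
    Measure.volume_eq_prod, Measure.prod_apply (e.measurable hC)]
  rfl

lemma volume_toReal_le_integral_sub {C : Set (Fin 2 → ℝ)} (hC : MeasurableSet C) {a b : ℝ}
    (hab : a ≤ b) {f g : ℝ → ℝ} (hint : IntervalIntegrable (fun x => g x - f x) volume a b)
    (hfg : ∀ x ∈ Icc a b, f x ≤ g x)
    (hsub : ∀ p ∈ C, p 0 ∈ Icc a b ∧ p 1 ∈ Icc (f (p 0)) (g (p 0))) :
    (volume C).toReal ≤ ∫ x in a..b, (g x - f x) := by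
  refine ENNReal.toReal_le_of_le_ofReal
    (intervalIntegral.integral_nonneg hab fun x hx => sub_nonneg.2 (hfg x hx)) ?_
  rw [volume_eq_lintegral_slice hC, intervalIntegral.integral_of_le hab,
    ← integral_Icc_eq_integral_Ioc, ofReal_integral_eq_lintegral_ofReal
      ((intervalIntegrable_iff_integrableOn_Icc_of_le hab).1 hint)
      ((ae_restrict_iff' measurableSet_Icc).2 (.of_forall fun x hx => sub_nonneg.2 (hfg x hx))),
    ← lintegral_indicator measurableSet_Icc]
  refine lintegral_mono fun x => ?_
  by_cases hx : x ∈ Icc a b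
  · rw [indicator_of_mem hx, ← Real.volume_Icc]
    exact measure_mono fun y hy => (hsub _ hy).2
  · have hempty : {y | ![x, y] ∈ C} = ∅ := eq_empty_of_forall_notMem fun y hy => hx (hsub _ hy).1
    simp only [hempty, measure_empty, zero_le]

end Integral

section Sas

variable {C : Set (Fin 2 → ℝ)} {m : ℝ} {F : ℝ → ℝ} {B : ℝ}

/-- The planar set `C` has horizontal projection `[-m, m]` with `0 < m`, and its upper boundary is
the graph of `F` over `[-m, m]`; the values of `F` elsewhere are irrelevant. -/
structure IsUpperBoundary (C : Set (Fin 2 → ℝ)) (m : ℝ) (F : ℝ → ℝ) : Prop where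
  pos : 0 < m
  mem : ∀ x ∈ Icc (-m) m, ![x, F x] ∈ C
  le : ∀ p ∈ C, p 0 ∈ Icc (-m) m ∧ p 1 ≤ F (p 0)

/-- The point of the graph of `F` with abscissa `m cos θ`. For `0 ≤ θ ≤ π` it traverses an upper
boundary over `[-m, m]` counterclockwise. -/
def arc (m : ℝ) (F : ℝ → ℝ) (θ : ℝ) : Fin 2 → ℝ := ![m * Real.cos θ, F (m * Real.cos θ)]

/-- The area of the symmetric hexagon spanned by the points of `arc` at the angles `θ`, `θ + π/3`
and `θ + 2π/3`. -/
def arcHexArea (m : ℝ) (F : ℝ → ℝ) (θ : ℝ) : ℝ :=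
  hexArea (arc m F θ) (arc m F (θ + Real.pi / 3)) (arc m F (θ + 2 * (Real.pi / 3)))

lemma sin_two_mul_pi_div_three : Real.sin (2 * (Real.pi / 3)) = √3 / 2 := by
  rw [Real.sin_two_mul, Real.cos_pi_div_three, Real.sin_pi_div_three]
  ring

lemma cos_two_mul_pi_div_three : Real.cos (2 * (Real.pi / 3)) = -(1 / 2) := by
  rw [Real.cos_two_mul, Real.cos_pi_div_three]
  norm_num

lemma arcHexArea_eq (m : ℝ) (F : ℝ → ℝ) (θ : ℝ) :
    arcHexArea m F θ = √3 * (F (m * Real.cos θ) * (m * Real.sin θ) +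
      F (m * Real.cos (θ + Real.pi / 3)) * (m * Real.sin (θ + Real.pi / 3)) +
      F (m * Real.cos (θ + 2 * (Real.pi / 3))) * (m * Real.sin (θ + 2 * (Real.pi / 3)))) := by
  have h3 : √3 ^ 2 = 3 := Real.sq_sqrt (by norm_num)
  simp only [arcHexArea, hexArea, cross, arc, cons_val_zero, cons_val_one]
  generalize F (m * Real.cos θ) = a
  generalize F (m * Real.cos (θ + Real.pi / 3)) = b
  generalize F (m * Real.cos (θ + 2 * (Real.pi / 3))) = c
  simp only [Real.cos_add, Real.sin_add, Real.cos_pi_div_three, Real.sin_pi_div_three,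
    cos_two_mul_pi_div_three, sin_two_mul_pi_div_three]
  linear_combination (-(m * (b + c) * Real.cos θ / 2)) * h3

lemma exists_max_slice (hC : IsCompact C) {x : ℝ} (hx : ∃ p ∈ C, p 0 = x) :
    ∃ y, ![x, y] ∈ C ∧ ∀ p ∈ C, p 0 = x → p 1 ≤ y := by
  have hclosed : IsClosed {p : Fin 2 → ℝ | p 0 = x} := isClosed_eq (by fun_prop) continuous_const
  obtain ⟨q, ⟨hqC, hq0⟩, hmax⟩ := (hC.inter_right hclosed).exists_isMaxOn hx
    (f := fun p => p 1) (by fun_prop)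
  refine ⟨q 1, ?_, fun p hp hp0 => hmax ⟨hp, hp0⟩⟩
  convert hqC
  ext i
  fin_cases i
  exacts [hq0.symm, rfl]

lemma exists_isUpperBoundary (hC : IsCompact C) (hconv : Convex ℝ C) (hsymm : C = -C)
    (hpos : ∃ p ∈ C, 0 < p 0) : ∃ m F, IsUpperBoundary C m F := by
  obtain ⟨p, hp, hp0⟩ := hpos
  obtain ⟨q, hq, hmax⟩ := hC.exists_isMaxOn ⟨p, hp⟩ (f := fun p : Fin 2 → ℝ => p 0) (by fun_prop)
  have hneg {r : Fin 2 → ℝ} (hr : r ∈ C) : -r ∈ C := by rwa [hsymm, neg_mem_neg]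
  have hm : 0 < q 0 := hp0.trans_le (hmax hp)
  have hslice (x : ℝ) (hx : x ∈ Icc (-q 0) (q 0)) : ∃ r ∈ C, r 0 = x := by
    obtain ⟨a, b, ha, hb, hab, hx⟩ : x ∈ segment ℝ (-q 0) (q 0) := by
      rwa [segment_eq_Icc (by linarith)]
    exact ⟨a • -q + b • q, hconv (hneg hq) hq ha hb hab, by simpa using hx⟩
  choose! F hF using fun x hx => exists_max_slice hC (hslice x hx)
  refine ⟨q 0, F, hm, fun x hx => (hF x hx).1, fun r hr => ?_⟩
  have hr0 : r 0 ∈ Icc (-q 0) (q 0) := ⟨neg_le.1 (hmax (hneg hr)), hmax hr⟩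
  exact ⟨hr0, (hF _ hr0).2 r hr rfl⟩

namespace IsUpperBoundary

lemma mem_slice (h : IsUpperBoundary C m F) (hsymm : C = -C) {p : Fin 2 → ℝ} (hp : p ∈ C) :
    p 1 ∈ Icc (-F (-p 0)) (F (p 0)) :=
  ⟨neg_le.1 (h.le (-p) (by rwa [hsymm, neg_mem_neg])).2, (h.le p hp).2⟩

lemma arc_mem (h : IsUpperBoundary C m F) (θ : ℝ) : arc m F θ ∈ C :=
  h.mem _ (mul_cos_mem_Icc h.pos.le θ)

lemma concaveOn (h : IsUpperBoundary C m F) (hconv : Convex ℝ C) :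
    ConcaveOn ℝ (Icc (-m) m) F := by
  refine ⟨convex_Icc _ _, fun x hx y hy a b ha hb hab => ?_⟩
  simpa using (h.le _ (hconv (h.mem x hx) (h.mem y hy) ha hb hab)).2

lemma continuousOn (h : IsUpperBoundary C m F) (hconv : Convex ℝ C) :
    ContinuousOn F (Ioo (-m) m) :=
  interior_Icc (a := -m) (b := m) ▸ (h.concaveOn hconv).continuousOn_interior

lemma exists_abs_le (h : IsUpperBoundary C m F) (hC : Bornology.IsBounded C) :
    ∃ R, ∀ x ∈ Icc (-m) m, |F x| ≤ R := by
  obtain ⟨R, hR⟩ := hC.exists_norm_le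
  exact ⟨R, fun x hx => (norm_le_pi_norm ![x, F x] 1).trans (hR _ (h.mem x hx))⟩

lemma volume_toReal_le (h : IsUpperBoundary C m F) (hC : IsCompact C) (hconv : Convex ℝ C)
    (hsymm : C = -C) : (volume C).toReal ≤ 2 * ∫ x in -m..m, F x := by
  have hm : -m ≤ m := neg_le_self h.pos.le
  obtain ⟨R, hR⟩ := h.exists_abs_le hC.isBounded
  have hint : IntervalIntegrable F volume (-m) m :=
    (intervalIntegrable_iff_integrableOn_Icc_of_le hm).2 (integrableOn_Icc_of_continuousOn_Ioo
      (h.continuousOn hconv) fun x hx => hR x (Ioo_subset_Icc_self hx))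
  have hint' : IntervalIntegrable (fun x => F (-x)) volume (-m) m := by
    simpa using (hint.comp_sub_left 0).symm
  calc (volume C).toReal ≤ ∫ x in -m..m, (F x - -F (-x)) :=
        volume_toReal_le_integral_sub hC.measurableSet hm (hint.sub hint'.neg)
          (fun x hx => (h.mem_slice hsymm (h.mem x hx)).1)
          fun p hp => ⟨(h.le p hp).1, h.mem_slice hsymm hp⟩
    _ = 2 * ∫ x in -m..m, F x := by
        simp_rw [sub_neg_eq_add]
        rw [intervalIntegral.integral_add hint hint', intervalIntegral.integral_comp_neg, neg_neg,
          two_mul]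

lemma continuousOn_arcHexArea (h : IsUpperBoundary C m F) (hconv : Convex ℝ C) :
    ContinuousOn (arcHexArea m F) (Ioo 0 (Real.pi / 3)) := by
  have hF := continuousOn_comp_mul_cos h.pos (h.continuousOn hconv)
  have hshift {δ : ℝ} (h0 : 0 ≤ δ) (hδ : δ ≤ 2 * (Real.pi / 3)) :
      ContinuousOn (fun θ => F (m * Real.cos (θ + δ))) (Ioo 0 (Real.pi / 3)) :=
    hF.comp (by fun_prop) fun θ hθ => ⟨by linarith [hθ.1], by linarith [hθ.2]⟩
  have h₀ := hF.mono (Ioo_subset_Ioo_right (by linarith [Real.pi_pos] : Real.pi / 3 ≤ Real.pi))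
  have h₁ := hshift (δ := Real.pi / 3) (by positivity) (by linarith [Real.pi_pos])
  have h₂ := hshift (δ := 2 * (Real.pi / 3)) (by positivity) le_rfl
  rw [funext (arcHexArea_eq m F)]
  exact continuousOn_const.mul
    (((h₀.mul (by fun_prop)).add (h₁.mul (by fun_prop))).add (h₂.mul (by fun_prop)))

-- The substitution `x = m cos θ` spreads the area of `C` evenly over the hexagons.
lemma volume_toReal_le_integral_arcHexArea (h : IsUpperBoundary C m F) (hC : IsCompact C)
    (hconv : Convex ℝ C) (hsymm : C = -C) :
    IntervalIntegrable (arcHexArea m F) volume 0 (Real.pi / 3) ∧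
      (volume C).toReal ≤ 2 / √3 * ∫ θ in 0..Real.pi / 3, arcHexArea m F θ := by
  obtain ⟨R, hR⟩ := h.exists_abs_le hC.isBounded
  obtain ⟨hint, hintegral⟩ := integral_comp_mul_cos h.pos (h.continuousOn hconv) hR
  have hpi : 3 * (Real.pi / 3) = Real.pi := by ring
  obtain ⟨hint3, hintegral3⟩ := integral_add_shifts (c := Real.pi / 3) (by positivity) (hpi ▸ hint)
  rw [funext (arcHexArea_eq m F)]
  refine ⟨hint3.const_mul √3, (h.volume_toReal_le hC hconv hsymm).trans_eq ?_⟩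
  rw [intervalIntegral.integral_const_mul, hintegral3, hpi, hintegral]
  field_simp

lemma arcHexArea_le (h : IsUpperBoundary C m F)
    (hhex : ∀ a ∈ C, ∀ b ∈ C, ∀ c ∈ C, hexArea a b c ≤ B) (θ : ℝ) : arcHexArea m F θ ≤ B :=
  hhex _ (h.arc_mem _) _ (h.arc_mem _) _ (h.arc_mem _)

lemma volume_toReal_le_of_hexArea_le (h : IsUpperBoundary C m F) (hC : IsCompact C)
    (hconv : Convex ℝ C) (hsymm : C = -C) (hhex : ∀ a ∈ C, ∀ b ∈ C, ∀ c ∈ C, hexArea a b c ≤ B) :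
    (volume C).toReal ≤ 2 / √3 * (Real.pi / 3 * B) := by
  obtain ⟨hint, hvol⟩ := h.volume_toReal_le_integral_arcHexArea hC hconv hsymm
  have hmono : ∫ θ in 0..Real.pi / 3, arcHexArea m F θ ≤ ∫ _ in 0..Real.pi / 3, B :=
    intervalIntegral.integral_mono_on (by positivity) hint intervalIntegrable_const
      fun θ _ => h.arcHexArea_le hhex θ
  rw [intervalIntegral.integral_const, sub_zero, smul_eq_mul] at hmono
  exact hvol.trans (mul_le_mul_of_nonneg_left hmono (by positivity))

lemma eqOn_arcHexArea_of_volume_eq (h : IsUpperBoundary C m F) (hC : IsCompact C)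
    (hconv : Convex ℝ C) (hsymm : C = -C) (hhex : ∀ a ∈ C, ∀ b ∈ C, ∀ c ∈ C, hexArea a b c ≤ B)
    (hvol : (volume C).toReal = 2 / √3 * (Real.pi / 3 * B)) :
    EqOn (arcHexArea m F) (fun _ => B) (Ioo 0 (Real.pi / 3)) := by
  obtain ⟨hint, hle⟩ := h.volume_toReal_le_integral_arcHexArea hC hconv hsymm
  rw [hvol] at hle
  refine eqOn_Ioo_of_le_integral (by positivity) (h.continuousOn_arcHexArea hconv) hint
    (h.arcHexArea_le hhex) ?_
  rw [sub_zero]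
  exact le_of_mul_le_mul_left hle (by positivity)

end IsUpperBoundary

end Sas

section Equality

lemma hasDerivAt_of_sub_le_mul_sub {f g η : ℝ → ℝ} {η' x : ℝ} {s : Set ℝ} (hs : s ∈ nhds x)
    (hg : ContinuousAt g x) (hη : HasDerivAt η η' x)
    (hle : ∀ y ∈ s, ∀ z ∈ s, f z - f y ≤ g y * (η z - η y)) :
    HasDerivAt f (g x * η') x := by
  have hx : x ∈ s := mem_of_mem_nhds hs
  have hsmall : (fun z => (g z - g x) * (η z - η x)) =o[nhds x] fun z => z - x := by
    have hg' : (fun z => g z - g x) =o[nhds x] fun _ => (1 : ℝ) :=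
      (Asymptotics.isLittleO_one_iff ℝ).2 (tendsto_sub_nhds_zero_iff.2 hg)
    simpa only [one_mul] using hg'.mul_isBigO hη.isBigO_sub
  have hbound : (fun z => f z - f x - g x * (η z - η x)) =O[nhds x]
      fun z => (g z - g x) * (η z - η x) := by
    refine Asymptotics.isBigO_iff.2 ⟨1, Filter.mem_of_superset hs fun z hz => ?_⟩
    rw [mem_ofPred_eq, one_mul, Real.norm_eq_abs, Real.norm_eq_abs]
    refine abs_le_abs_of_nonpos ?_ ?_
    · linarith [hle x hx z hz]
    · linarith [hle z hz x hx]
  have hdiff : HasDerivAt (fun z => f z - g x * η z) 0 x := by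
    rw [hasDerivAt_iff_isLittleO]
    refine (hbound.trans_isLittleO hsmall).congr_left fun z => ?_
    rw [smul_zero]
    ring
  simpa using hdiff.fun_add (hη.const_mul (g x))

lemma subset_of_forall_abs_lt {ι : Type*} {A B : Set (ι → ℝ)} {i : ι} {m : ℝ} (hm : 0 < m)
    (hA : StarConvex ℝ 0 A) (hB : IsClosed B) (hle : ∀ p ∈ A, |p i| ≤ m)
    (hlt : ∀ p ∈ A, |p i| < m → p ∈ B) : A ⊆ B := by
  intro p hp
  have hlim : Filter.Tendsto (fun t : ℝ => t • p) (nhdsWithin 1 (Iio 1)) (nhds p) := by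
    have hcont : Continuous fun t : ℝ => t • p := by fun_prop
    simpa only [one_smul] using (hcont.tendsto 1).mono_left nhdsWithin_le_nhds
  refine hB.mem_of_tendsto hlim ?_
  filter_upwards [Ioo_mem_nhdsLT zero_lt_one] with t ht
  refine hlt _ (hA.smul_mem hp ht.1.le ht.2.le) ?_
  rw [Pi.smul_apply, smul_eq_mul, abs_mul, abs_of_pos ht.1]
  exact (mul_le_mul_of_nonneg_left (hle p hp) ht.1.le).trans_lt (mul_lt_of_lt_one_left hm ht.2)

lemma mem_mulVec_image_euclideanUnitBall_two_iff {m L M : ℝ} (hm : m ≠ 0) (hM : M ≠ 0)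
    {p : Fin 2 → ℝ} :
    p ∈ (!![m, 0; L, M] *ᵥ ·) '' euclideanUnitBall 2 ↔
      (p 0 / m) ^ 2 + ((p 1 - L * (p 0 / m)) / M) ^ 2 ≤ 1 := by
  have hmulVec (x : Fin 2 → ℝ) : !![m, 0; L, M] *ᵥ x = ![m * x 0, L * x 0 + M * x 1] := by
    simp [cons_mulVec, dotProduct, Fin.sum_univ_two]
  have hmem (x : Fin 2 → ℝ) : x ∈ euclideanUnitBall 2 ↔ x 0 ^ 2 + x 1 ^ 2 ≤ 1 := by
    simp only [euclideanUnitBall, mem_ofPred_eq, dotProduct, Fin.sum_univ_two, sq]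
  constructor
  · rintro ⟨x, hx, rfl⟩
    simp only [hmulVec, cons_val_zero, cons_val_one]
    rwa [mul_div_cancel_left₀ _ hm, add_sub_cancel_left, mul_div_cancel_left₀ _ hM, ← hmem]
  · intro hp
    refine ⟨![p 0 / m, (p 1 - L * (p 0 / m)) / M], (hmem _).2 hp, ?_⟩
    simp only [hmulVec, cons_val_zero, cons_val_one]
    rw [mul_div_cancel₀ _ hm, mul_div_cancel₀ _ hM, add_sub_cancel]
    ext i
    fin_cases i <;> rfl

lemma eq_of_cross_arc_eq {m M L θ δ : ℝ} {F : ℝ → ℝ} (hm : m ≠ 0) (hcos : Real.cos θ ≠ 0)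
    (hθ : F (m * Real.cos θ) = M * Real.sin θ + L * Real.cos θ)
    (hcross : cross (arc m F θ) (arc m F (θ + δ)) = m * M * Real.sin δ) :
    F (m * Real.cos (θ + δ)) = M * Real.sin (θ + δ) + L * Real.cos (θ + δ) := by
  have hδ : Real.sin δ = Real.sin (θ + δ) * Real.cos θ - Real.cos (θ + δ) * Real.sin θ := by
    rw [← Real.sin_sub, add_sub_cancel_left]
  simp only [cross, arc, cons_val_zero, cons_val_one] at hcross
  rw [hθ, hδ] at hcross
  refine mul_left_cancel₀ (mul_ne_zero hm hcos) ?_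
  linear_combination hcross

lemma eq_add_of_sub_le {u : ℝ → ℝ} {M : ℝ} {b : ℝ} (hb : b ≤ Real.pi / 2)
    (hle : ∀ θ ∈ Ioo 0 b, ∀ φ ∈ Ioo 0 b, u φ / Real.cos φ - u θ / Real.cos θ ≤
      M / Real.sin θ * ((Real.cos φ)⁻¹ - (Real.cos θ)⁻¹)) :
    ∃ L, ∀ θ ∈ Ioo 0 b, u θ = M * Real.sin θ + L * Real.cos θ := by
  have hsin (θ : ℝ) (hθ : θ ∈ Ioo 0 b) : Real.sin θ ≠ 0 :=
    (Real.sin_pos_of_mem_Ioo ⟨hθ.1, by linarith [hθ.2, Real.pi_pos]⟩).ne'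
  have hcos (θ : ℝ) (hθ : θ ∈ Ioo 0 b) : Real.cos θ ≠ 0 :=
    (Real.cos_pos_of_mem_Ioo ⟨by linarith [hθ.1, Real.pi_pos], by linarith [hθ.2]⟩).ne'
  have hderiv (θ : ℝ) (hθ : θ ∈ Ioo 0 b) :
      HasDerivAt (fun θ => u θ / Real.cos θ - M * Real.tan θ) 0 θ := by
    have hquot := hasDerivAt_of_sub_le_mul_sub (f := fun θ => u θ / Real.cos θ)
      (g := fun θ => M / Real.sin θ) (η := fun θ => (Real.cos θ)⁻¹) (isOpen_Ioo.mem_nhds hθ)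
      (continuousAt_const.div Real.continuous_sin.continuousAt (hsin θ hθ))
      ((Real.hasDerivAt_cos θ).fun_inv (hcos θ hθ)) hle
    refine (hquot.fun_sub ((Real.hasDerivAt_tan (hcos θ hθ)).const_mul M)).congr_deriv ?_
    field [hsin θ hθ, hcos θ hθ]
  obtain ⟨L, hL⟩ := isOpen_Ioo.exists_is_const_of_deriv_eq_zero isPreconnected_Ioo
    (fun θ hθ => (hderiv θ hθ).differentiableAt.differentiableWithinAt)
    fun θ hθ => (hderiv θ hθ).deriv
  refine ⟨L, fun θ hθ => ?_⟩
  have hc := hcos θ hθ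
  have hLθ := hL θ hθ
  rw [Real.tan_eq_sin_div_cos] at hLθ
  field_simp at hLθ
  linear_combination hLθ

lemma eqOn_Ioo_of_eqOn_diff_countable {f g : ℝ → ℝ} {a b : ℝ} {s : Set ℝ} (hs : s.Countable)
    (hf : ContinuousOn f (Ioo a b)) (hg : ContinuousOn g (Ioo a b))
    (h : EqOn f g (Ioo a b \ s)) : EqOn f g (Ioo a b) := by
  refine h.of_subset_closure hf hg sdiff_subset ?_
  rw [sdiff_eq]
  exact (hs.dense_compl ℝ).open_subset_closure_inter isOpen_Ioo

namespace IsUpperBoundary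

variable {C : Set (Fin 2 → ℝ)} {m : ℝ} {F : ℝ → ℝ}

lemma mem_iff (h : IsUpperBoundary C m F) (hconv : Convex ℝ C) (hsymm : C = -C)
    {p : Fin 2 → ℝ} (hp : p 0 ∈ Icc (-m) m) :
    p ∈ C ↔ p 1 ∈ Icc (-F (-p 0)) (F (p 0)) := by
  refine ⟨h.mem_slice hsymm, fun hp1 => ?_⟩
  have hlow : -![-p 0, F (-p 0)] ∈ C := by
    rw [hsymm, neg_mem_neg]
    exact h.mem _ ⟨neg_le_neg hp.2, neg_le.1 hp.1⟩
  rw [← segment_eq_Icc (hp1.1.trans hp1.2)] at hp1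
  obtain ⟨a, b, ha, hb, hab, hp1⟩ := hp1
  convert hconv hlow (h.mem _ hp) ha hb hab using 1
  ext i
  fin_cases i
  · simp [← add_mul, hab]
  · simpa using hp1.symm

-- The point `arc m F φ` maximises the area of a hexagon whose other two vertices are kept fixed,
-- so it lies on a support line parallel to the diagonal through them.
lemma div_cos_sub_div_cos_le (h : IsUpperBoundary C m F) {M θ φ : ℝ}
    (hhex : ∀ a ∈ C, ∀ b ∈ C, ∀ c ∈ C, hexArea a b c ≤ 3 * (m * M * (√3 / 2)))
    (hθ : cross (arc m F θ) (arc m F (θ + Real.pi / 3)) = m * M * (√3 / 2) ∧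
      cross (arc m F (θ + Real.pi / 3)) (arc m F (θ + 2 * (Real.pi / 3))) = m * M * (√3 / 2) ∧
      cross (arc m F θ) (arc m F (θ + 2 * (Real.pi / 3))) = m * M * (√3 / 2))
    (hsinθ : 0 < Real.sin θ) (hcosθ : 0 < Real.cos θ) (hcosφ : 0 < Real.cos φ) :
    F (m * Real.cos φ) / Real.cos φ - F (m * Real.cos θ) / Real.cos θ ≤
      M / Real.sin θ * ((Real.cos φ)⁻¹ - (Real.cos θ)⁻¹) := by
  have hm := h.pos
  have hle := hhex _ (h.arc_mem φ) _ (h.arc_mem (θ + Real.pi / 3)) _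
    (h.arc_mem (θ + 2 * (Real.pi / 3)))
  obtain ⟨hab, hbc, hac⟩ := hθ
  rw [hexArea, hbc] at hle
  have hsum : Real.cos (θ + Real.pi / 3) + Real.cos (θ + 2 * (Real.pi / 3)) =
      -(√3 * Real.sin θ) := by
    simp only [Real.cos_add, Real.cos_pi_div_three, Real.sin_pi_div_three,
      cos_two_mul_pi_div_three, sin_two_mul_pi_div_three]
    ring
  simp only [cross, arc, cons_val_zero, cons_val_one] at hle hab hac
  set s := F (m * Real.cos (θ + Real.pi / 3)) + F (m * Real.cos (θ + 2 * (Real.pi / 3)))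
  have hφ : Real.cos φ * s + √3 * Real.sin θ * F (m * Real.cos φ) ≤ √3 * M := by
    refine le_of_mul_le_mul_left ?_ hm
    linear_combination hle + m * F (m * Real.cos φ) * hsum
  have hθ : Real.cos θ * s + √3 * Real.sin θ * F (m * Real.cos θ) = √3 * M := by
    refine mul_left_cancel₀ hm.ne' ?_
    linear_combination hab + hac + m * F (m * Real.cos θ) * hsum
  have hs : s = (√3 * M - √3 * Real.sin θ * F (m * Real.cos θ)) / Real.cos θ := by
    rw [eq_div_iff hcosθ.ne']
    linear_combination hθ
  rw [hs] at hφ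
  refine le_of_sub_nonneg ?_
  have hden : 0 ≤ √3 * Real.sin θ * Real.cos φ := by positivity
  refine (div_nonneg (sub_nonneg.2 hφ) hden).trans_eq ?_
  field

lemma exists_eq_add_of_cross_arc_eq (h : IsUpperBoundary C m F) (hconv : Convex ℝ C) {M : ℝ}
    (hhex : ∀ a ∈ C, ∀ b ∈ C, ∀ c ∈ C, hexArea a b c ≤ 3 * (m * M * (√3 / 2)))
    (hcross : ∀ θ ∈ Ioo 0 (Real.pi / 3),
      cross (arc m F θ) (arc m F (θ + Real.pi / 3)) = m * M * (√3 / 2) ∧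
      cross (arc m F (θ + Real.pi / 3)) (arc m F (θ + 2 * (Real.pi / 3))) = m * M * (√3 / 2) ∧
      cross (arc m F θ) (arc m F (θ + 2 * (Real.pi / 3))) = m * M * (√3 / 2)) :
    ∃ L, ∀ θ ∈ Ioo 0 Real.pi, F (m * Real.cos θ) = M * Real.sin θ + L * Real.cos θ := by
  have hpi := Real.pi_pos
  have hsin (θ : ℝ) (hθ : θ ∈ Ioo 0 (Real.pi / 3)) : 0 < Real.sin θ :=
    Real.sin_pos_of_mem_Ioo ⟨hθ.1, by linarith [hθ.2]⟩
  have hcos (θ : ℝ) (hθ : θ ∈ Ioo 0 (Real.pi / 3)) : 0 < Real.cos θ :=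
    Real.cos_pos_of_mem_Ioo ⟨by linarith [hθ.1], by linarith [hθ.2]⟩
  obtain ⟨L, hL⟩ := eq_add_of_sub_le (u := fun θ => F (m * Real.cos θ)) (by linarith)
    fun θ hθ φ hφ => h.div_cos_sub_div_cos_le hhex (hcross θ hθ) (hsin θ hθ) (hcos θ hθ) (hcos φ hφ)
  refine ⟨L, eqOn_Ioo_of_eqOn_diff_countable
    (Set.toFinite {Real.pi / 3, 2 * (Real.pi / 3)}).countable
    (continuousOn_comp_mul_cos h.pos (h.continuousOn hconv)) (by fun_prop) fun θ ⟨hθ, hne⟩ => ?_⟩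
  simp only [mem_insert_iff, mem_singleton_iff, not_or] at hne
  rcases lt_or_gt_of_ne hne.1 with h₁ | h₁
  · exact hL θ ⟨hθ.1, h₁⟩
  rcases lt_or_gt_of_ne hne.2 with h₂ | h₂
  · have hmem : θ - Real.pi / 3 ∈ Ioo 0 (Real.pi / 3) := ⟨by linarith, by linarith⟩
    have hfirst := (hcross _ hmem).1
    rw [← Real.sin_pi_div_three] at hfirst
    simpa using eq_of_cross_arc_eq h.pos.ne' (hcos _ hmem).ne' (hL _ hmem) hfirst
  · have hmem : θ - 2 * (Real.pi / 3) ∈ Ioo 0 (Real.pi / 3) := ⟨by linarith, by linarith [hθ.2]⟩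
    have hthird := (hcross _ hmem).2.2
    rw [← sin_two_mul_pi_div_three] at hthird
    simpa using eq_of_cross_arc_eq h.pos.ne' (hcos _ hmem).ne' (hL _ hmem) hthird

lemma mem_iff_mem_mulVec_image (h : IsUpperBoundary C m F) (hconv : Convex ℝ C) (hsymm : C = -C)
    {M L : ℝ} (hM : 0 < M)
    (hF : ∀ θ ∈ Ioo 0 Real.pi, F (m * Real.cos θ) = M * Real.sin θ + L * Real.cos θ)
    {p : Fin 2 → ℝ} (hp : |p 0| < m) :
    p ∈ C ↔ p ∈ (!![m, 0; L, M] *ᵥ ·) '' euclideanUnitBall 2 := by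
  have hm := h.pos
  obtain ⟨θ, hθ, hpθ⟩ : ∃ θ ∈ Ioo 0 Real.pi, p 0 = m * Real.cos θ := by
    obtain ⟨hlow, hupp⟩ := abs_lt.1 hp
    have hlow' : -1 < p 0 / m := by rw [lt_div_iff₀ hm]; linarith
    have hupp' : p 0 / m < 1 := by rwa [div_lt_one hm]
    refine ⟨Real.arccos (p 0 / m), ⟨Real.arccos_pos.2 hupp', ?_⟩, ?_⟩
    · exact (Real.arccos_le_pi _).lt_of_ne fun heq => hlow'.not_ge (Real.arccos_eq_pi.1 heq)
    · rw [Real.cos_arccos hlow'.le hupp'.le, mul_div_cancel₀ _ hm.ne']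
  have hlower : F (-(m * Real.cos θ)) = M * Real.sin θ - L * Real.cos θ := by
    have hrefl := hF (Real.pi - θ) ⟨sub_pos.2 hθ.2, sub_lt_self _ hθ.1⟩
    rw [Real.sin_pi_sub, Real.cos_pi_sub, mul_neg, mul_neg] at hrefl
    exact hrefl
  have hsin : 0 < Real.sin θ := Real.sin_pos_of_mem_Ioo hθ
  rw [h.mem_iff hconv hsymm (abs_le.1 hp.le), mem_mulVec_image_euclideanUnitBall_two_iff hm.ne'
    hM.ne', hpθ, hlower, hF θ hθ, mul_div_cancel_left₀ _ hm.ne', ← le_sub_iff_add_le',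
    ← Real.sin_sq, sq_le_sq, abs_div, abs_of_pos hM, abs_of_pos hsin, div_le_iff₀' hM, abs_le,
    mem_Icc]
  constructor <;> rintro ⟨hlow, hupp⟩ <;> constructor <;> linarith

lemma eq_mulVec_image (h : IsUpperBoundary C m F) (hC : IsClosed C) (hconv : Convex ℝ C)
    (hsymm : C = -C) {M L : ℝ} (hM : 0 < M)
    (hF : ∀ θ ∈ Ioo 0 Real.pi, F (m * Real.cos θ) = M * Real.sin θ + L * Real.cos θ) :
    C = (!![m, 0; L, M] *ᵥ ·) '' euclideanUnitBall 2 := by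
  set E := (!![m, 0; L, M] *ᵥ ·) '' euclideanUnitBall 2
  have hiff {p : Fin 2 → ℝ} (hp : |p 0| < m) : p ∈ C ↔ p ∈ E :=
    h.mem_iff_mem_mulVec_image hconv hsymm hM hF hp
  have hE0 : 0 ∈ E :=
    (mem_mulVec_image_euclideanUnitBall_two_iff h.pos.ne' hM.ne').2 (by simp)
  have hC0 : 0 ∈ C := (hiff (by simpa using h.pos)).2 hE0
  have hEclosed : IsClosed E := ((isCompact_euclideanUnitBall 2).image
    (continuous_const.matrix_mulVec continuous_id)).isClosed
  have hEconv : Convex ℝ E :=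
    (polarBody_euclideanUnitBall 2 ▸ convex_polarBody _).linear_image (mulVecLin !![m, 0; L, M])
  have hEle (p : Fin 2 → ℝ) (hp : p ∈ E) : |p 0| ≤ m := by
    rw [mem_mulVec_image_euclideanUnitBall_two_iff h.pos.ne' hM.ne'] at hp
    have hsq : (p 0 / m) ^ 2 ≤ 1 := by linarith [sq_nonneg ((p 1 - L * (p 0 / m)) / M)]
    rwa [sq_le_one_iff_abs_le_one, abs_div, abs_of_pos h.pos, div_le_one h.pos] at hsq
  exact Subset.antisymm
    (subset_of_forall_abs_lt h.pos (hconv.starConvex hC0) hEclosed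
      (fun p hp => abs_le.2 (h.le p hp).1) fun p hp hlt => (hiff hlt).1 hp)
    (subset_of_forall_abs_lt h.pos (hEconv.starConvex hE0) hC hEle
      fun p hp hlt => (hiff hlt).2 hp)

lemma exists_eq_mulVec_image_of_volume_eq (h : IsUpperBoundary C m F) (hC : IsCompact C)
    (hconv : Convex ℝ C) (hsymm : C = -C) {B : ℝ} (hB : 0 < B)
    (hhex : ∀ a ∈ C, ∀ b ∈ C, ∀ c ∈ C, hexArea a b c ≤ B)
    (heq : ∀ a ∈ C, ∀ b ∈ C, ∀ c ∈ C, hexArea a b c = B →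
      cross a b = cross b c ∧ cross b c = cross a c)
    (hvol : (volume C).toReal = 2 / √3 * (Real.pi / 3 * B)) :
    ∃ A : Matrix (Fin 2) (Fin 2) ℝ, A.det ≠ 0 ∧ C = (A *ᵥ ·) '' euclideanUnitBall 2 := by
  have hm := h.pos
  obtain ⟨M, hM, rfl⟩ : ∃ M, 0 < M ∧ B = 3 * (m * M * (√3 / 2)) :=
    ⟨2 * B / (3 * √3 * m), by positivity, by field⟩
  have hcross (θ : ℝ) (hθ : θ ∈ Ioo 0 (Real.pi / 3)) :
      cross (arc m F θ) (arc m F (θ + Real.pi / 3)) = m * M * (√3 / 2) ∧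
      cross (arc m F (θ + Real.pi / 3)) (arc m F (θ + 2 * (Real.pi / 3))) = m * M * (√3 / 2) ∧
      cross (arc m F θ) (arc m F (θ + 2 * (Real.pi / 3))) = m * M * (√3 / 2) := by
    have harea := h.eqOn_arcHexArea_of_volume_eq hC hconv hsymm hhex hvol hθ
    obtain ⟨hab, hbc⟩ := heq _ (h.arc_mem _) _ (h.arc_mem _) _ (h.arc_mem _) harea
    simp only [arcHexArea, hexArea] at harea
    exact ⟨by linarith, by linarith, by linarith⟩
  obtain ⟨L, hL⟩ := h.exists_eq_add_of_cross_arc_eq hconv hhex hcross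
  refine ⟨!![m, 0; L, M], ?_, h.eq_mulVec_image hC.isClosed hconv hsymm hM hL⟩
  rw [det_fin_two_of, zero_mul, sub_zero]
  positivity

end IsUpperBoundary

end Equality

section PolarVolume

variable {K : Set (Fin 2 → ℝ)}

lemma exists_isUpperBoundary_polarBody (hK : Bornology.IsBounded K) (hsymm : K = -K)
    (h0 : 0 ∈ interior K) : ∃ m F, IsUpperBoundary (polarBody K) m F := by
  obtain ⟨ε, hε, hmem⟩ := exists_single_mem_polarBody hK
  exact exists_isUpperBoundary (isCompact_polarBody h0) (convex_polarBody K)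
    (polarBody_eq_neg hsymm) ⟨_, hmem 0, by simpa using hε⟩

lemma two_div_sqrt_three_mul (x : ℝ) :
    2 / √3 * (Real.pi / 3 * (9 / 4 / x)) = Real.pi * √3 / 2 / x := by
  have h3 : √3 ^ 2 = 3 := Real.sq_sqrt (by norm_num)
  field_simp
  rw [h3]
  norm_num

lemma critDet_mul_volume_polarBody_le (hK : Bornology.IsBounded K) (hsymm : K = -K)
    (h0 : 0 ∈ interior K) :
    critDet K * (volume (polarBody K)).toReal ≤ Real.pi * √3 / 2 := by
  have hΔ := critDet_pos hK hsymm h0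
  obtain ⟨m, F, h⟩ := exists_isUpperBoundary_polarBody hK hsymm h0
  rw [← le_div_iff₀' hΔ, ← two_div_sqrt_three_mul]
  refine h.volume_toReal_le_of_hexArea_le (isCompact_polarBody h0) (convex_polarBody K)
    (polarBody_eq_neg hsymm) fun a ha b hb c hc => ?_
  rw [le_div_iff₀' hΔ]
  exact critDet_mul_hexArea_le hsymm h0 ha hb hc

lemma exists_polarBody_eq_mulVec_image (hK : Bornology.IsBounded K) (hsymm : K = -K)
    (h0 : 0 ∈ interior K)
    (heq : critDet K * (volume (polarBody K)).toReal = Real.pi * √3 / 2) :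
    ∃ A : Matrix (Fin 2) (Fin 2) ℝ, A.det ≠ 0 ∧
      polarBody K = (A *ᵥ ·) '' euclideanUnitBall 2 := by
  have hΔ := critDet_pos hK hsymm h0
  obtain ⟨m, F, h⟩ := exists_isUpperBoundary_polarBody hK hsymm h0
  refine h.exists_eq_mulVec_image_of_volume_eq (B := 9 / 4 / critDet K) (isCompact_polarBody h0)
    (convex_polarBody K) (polarBody_eq_neg hsymm) (by positivity) ?_ ?_ ?_
  · intro a ha b hb c hc
    rw [le_div_iff₀' hΔ]
    exact critDet_mul_hexArea_le hsymm h0 ha hb hc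
  · intro a ha b hb c hc hmax
    rw [eq_div_iff hΔ.ne', mul_comm] at hmax
    exact cross_eq_of_critDet_mul_hexArea_eq hsymm h0 ha hb hc hmax
  · rwa [two_div_sqrt_three_mul, eq_div_iff hΔ.ne', mul_comm]

lemma polarBody_mulVec_image_euclideanUnitBall {n : ℕ} {A : Matrix (Fin n) (Fin n) ℝ}
    (hA : A.det ≠ 0) :
    polarBody ((A *ᵥ ·) '' euclideanUnitBall n) = (Aᵀ⁻¹ *ᵥ ·) '' euclideanUnitBall n := by
  rw [polarBody_mulVec_image_of_det_ne_zero hA, polarBody_euclideanUnitBall]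

lemma det_inv_transpose {n : ℕ} (A : Matrix (Fin n) (Fin n) ℝ) : (Aᵀ⁻¹).det = A.det⁻¹ := by
  rw [det_nonsing_inv, det_transpose, Ring.inverse_eq_inv']

lemma isEllipse_of_critDet_mul_volume_polarBody_eq (hK : IsCompact K) (hconv : Convex ℝ K)
    (hsymm : K = -K) (h0 : 0 ∈ interior K)
    (heq : critDet K * (volume (polarBody K)).toReal = Real.pi * √3 / 2) : IsEllipse K := by
  obtain ⟨A, hA, hpolar⟩ := exists_polarBody_eq_mulVec_image hK.isBounded hsymm h0 heq
  refine ⟨Aᵀ⁻¹, det_inv_transpose A ▸ inv_ne_zero hA, 0, ?_⟩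
  simp only [add_zero]
  rw [← polarBody_polarBody hK.isClosed hconv (interior_subset h0), hpolar,
    polarBody_mulVec_image_euclideanUnitBall hA, euclideanUnitBall]

lemma le_critDet_mul_volume_polarBody_of_isEllipse (hK : Bornology.IsBounded K) (hsymm : K = -K)
    (hE : IsEllipse K) : Real.pi * √3 / 2 ≤ critDet K * (volume (polarBody K)).toReal := by
  obtain ⟨A, hA, hKA⟩ := hE.exists_eq_mulVec_image hsymm
  have hvol : (volume (polarBody K)).toReal = |A.det|⁻¹ * Real.pi := by
    rw [hKA, polarBody_mulVec_image_euclideanUnitBall hA, volume_mulVec_image, det_inv_transpose,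
      abs_inv, volume_euclideanUnitBall_two]
  calc Real.pi * √3 / 2 = √3 / 2 * |A.det| * (|A.det|⁻¹ * Real.pi) := by
        field [abs_ne_zero.2 hA]
    _ ≤ critDet K * (|A.det|⁻¹ * Real.pi) := by
        gcongr
        exact sqrt_three_div_two_mul_abs_det_le_critDet hK hsymm hA hKA.superset
    _ = critDet K * (volume (polarBody K)).toReal := by rw [hvol]

lemma critDet_mul_volume_polarBody_eq_iff (hK : IsCompact K) (hconv : Convex ℝ K)
    (hsymm : K = -K) (h0 : 0 ∈ interior K) :
    critDet K * (volume (polarBody K)).toReal = Real.pi * √3 / 2 ↔ IsEllipse K :=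
  ⟨isEllipse_of_critDet_mul_volume_polarBody_eq hK hconv hsymm h0, fun hE =>
    (critDet_mul_volume_polarBody_le hK.isBounded hsymm h0).antisymm
      (le_critDet_mul_volume_polarBody_of_isEllipse hK.isBounded hsymm hE)⟩

end PolarVolume

/-- For every centrally symmetric convex body `K ⊆ ℝ²`,
`δ_L(K) ≥ |K|·|K°|/(2π√3)`, with equality if and only if `K` is an ellipse. -/
theorem deltaL_ge_volume_mul_volume_polar (K : Set (Fin 2 → ℝ))
    (hKc : IsCompact K) (hKconv : Convex ℝ K) (hKint : (interior K).Nonempty)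
    (hsymm : K = -K) :
    deltaL K ≥ (volume K).toReal * (volume (polarBody K)).toReal / (2 * Real.pi * Real.sqrt 3) ∧
    (deltaL K = (volume K).toReal * (volume (polarBody K)).toReal / (2 * Real.pi * Real.sqrt 3)
      ↔ IsEllipse K) := by
  have h0 : 0 ∈ interior K := zero_mem_interior_of_convex_of_eq_neg hKconv hKint hsymm
  have hΔ : 0 < critDet K := critDet_pos hKc.isBounded hsymm h0
  have hV : 0 < (volume K).toReal := ENNReal.toReal_pos
    (Measure.measure_pos_of_nonempty_interior _ hKint).ne' hKc.measure_lt_top.ne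
  have hle := critDet_mul_volume_polarBody_le hKc.isBounded hsymm h0
  have hiff := critDet_mul_volume_polarBody_eq_iff hKc hKconv hsymm h0
  set V := (volume K).toReal
  set W := (volume (polarBody K)).toReal
  set c := V / (2 * Real.pi * √3 * critDet K)
  have hc : 0 < c := by positivity
  have hdelta : deltaL K = c * (Real.pi * √3 / 2) := by
    rw [deltaL]
    field
  have hbound : V * W / (2 * Real.pi * √3) = c * (critDet K * W) := by field
  rw [hdelta, hbound, mul_right_inj' hc.ne', eq_comm]
  exact ⟨mul_le_mul_of_nonneg_left hle hc.le, hiff⟩
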